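/- The infinitesimal deformation η₁ with base C₁ = K ⊕ H′ is universal: for any infinitesimal deformation λ of L with finite dimensional base A there exists a unique algebra homomorphism φ: C₁ → A with φ(1)=1 and ε_A ∘ φ = ε_{C₁} such that the push-out φ_*η₁ is equivalent to λ. -/

import Mathlib

open TensorProduct

noncomputable def reduceTensor {K A L : Type*} [Field K] [CommRing A] [Algebra K A]
    [AddCommGroup L] [Module K L] (ξ : A →ₗ[K] K) :
    A ⊗[K] L →ₗ[K] L :=
  (TensorProduct.lid K L).toLinearMap.comp (TensorProduct.map ξ LinearMap.id)


theorem rT_tmul {K A L : Type*} [Field K] [CommRing A] [Algebra K A]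
    [AddCommGroup L] [Module K L] (ξ : A →ₗ[K] K) (a : A) (l : L) :
    reduceTensor ξ (a ⊗ₜ[K] l) = ξ a • l := by
  simp [reduceTensor]

theorem rT_smul {K A L : Type*} [Field K] [CommRing A] [Algebra K A]
    [AddCommGroup L] [Module K L] (ε : A →ₐ[K] K) (ξ : A →ₗ[K] K)
    (hd : ∀ a b, ξ (a * b) = ε a * ξ b + ξ a * ε b) (c : A) (u : A ⊗[K] L) :
    reduceTensor ξ (c • u) = ε c • reduceTensor ξ u + ξ c • reduceTensor ε.toLinearMap u := by
  induction u with
  | zero => simp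
  | add u v hu hv => rw [smul_add, map_add, hu, hv, map_add, map_add]; module
  | tmul a l =>
    rw [TensorProduct.smul_tmul', rT_tmul, rT_tmul, rT_tmul, smul_eq_mul, hd]
    simp only [AlgHom.toLinearMap_apply]
    module

theorem rT_smul_eps {K A L : Type*} [Field K] [CommRing A] [Algebra K A]
    [AddCommGroup L] [Module K L] (ε : A →ₐ[K] K) (c : A) (u : A ⊗[K] L) :
    reduceTensor ε.toLinearMap (c • u) = ε c • reduceTensor ε.toLinearMap u := by
  induction u with
  | zero => simp
  | add u v hu hv => rw [smul_add, map_add, hu, hv, map_add]; module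
  | tmul a l =>
    rw [TensorProduct.smul_tmul', rT_tmul, rT_tmul, smul_eq_mul]
    simp only [AlgHom.toLinearMap_apply, map_mul]
    module

theorem rT_map {K A C L : Type*} [Field K] [CommRing A] [Algebra K A] [CommRing C] [Algebra K C]
    [AddCommGroup L] [Module K L] (ξ : A →ₗ[K] K) (φ : C →ₗ[K] A) (u : C ⊗[K] L) :
    reduceTensor ξ (TensorProduct.map φ LinearMap.id u) = reduceTensor (ξ.comp φ) u := by
  induction u with
  | zero => simp
  | add u v hu hv => simp only [map_add, hu, hv]
  | tmul a l => simp [rT_tmul]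

theorem rT_dual {K C H L : Type*} [Field K] [CommRing C] [Algebra K C]
    [AddCommGroup H] [Module K H] [FiniteDimensional K H]
    [AddCommGroup L] [Module K L] (ζ : C →ₗ[K] K) (j : Module.Dual K H →ₗ[K] C)
    (α : H) (h : ∀ f, ζ (j f) = f α) (F : H →ₗ[K] L) :
    reduceTensor ζ (TensorProduct.map j LinearMap.id ((dualTensorHomEquiv K H L).symm F))
      = F α := by
  obtain ⟨w, rfl⟩ := (dualTensorHomEquiv K H L).surjective F
  rw [LinearEquiv.symm_apply_apply]
  induction w with
  | zero => simp
  | add u v hu hv => simp only [map_add, hu, hv, LinearMap.add_apply]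
  | tmul a l => simp [rT_tmul, h]

theorem exists_coords {K A : Type*} [Field K] [CommRing A] [Algebra K A] [FiniteDimensional K A]
    (ε : A →ₐ[K] K) :
    ∃ (n : ℕ) (m : Fin n → A) (ξ : Fin n → A →ₗ[K] K),
      (∀ i, ε (m i) = 0) ∧ (∀ i, ξ i 1 = 0) ∧ (∀ i k, ξ k (m i) = if i = k then 1 else 0) ∧
      (∀ a, a = ε a • (1 : A) + ∑ i, ξ i a • m i) := by
  let M := LinearMap.ker ε.toLinearMap
  let b := Module.finBasis K M
  let p : A →ₗ[K] M := LinearMap.codRestrict M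
    (LinearMap.id - (LinearMap.toSpanSingleton K A 1).comp ε.toLinearMap) (by
      intro a
      simp [M])
  have hp : ∀ a, (p a : A) = a - ε a • (1 : A) := fun a => by simp [p]
  have hpm : ∀ x : M, p x = x := by
    intro x
    apply Subtype.ext
    have : ε (x : A) = 0 := x.2
    rw [hp, this]; simp
  refine ⟨_, fun i => (b i : A), fun i => (b.coord i).comp p, fun i => (b i).2, ?_, ?_, ?_⟩
  · intro i
    have : p 1 = 0 := Subtype.ext (by rw [hp]; simp)
    simp [this]
  · intro i k
    simp only [LinearMap.comp_apply, hpm]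
    simp [Finsupp.single_apply]
  · intro a
    have h := congrArg (Subtype.val) (b.sum_repr (p a))
    rw [hp] at h
    simp only [LinearMap.comp_apply, Module.Basis.coord_apply]
    rw [eq_sub_iff_add_eq] at h
    refine h.symm.trans ?_
    rw [add_comm, Submodule.coe_sum]
    rfl

theorem rT_ext {K A L : Type*} [Field K] [CommRing A] [Algebra K A]
    [AddCommGroup L] [Module K L] (ε : A →ₐ[K] K) {n : ℕ} (m : Fin n → A)
    (ξ : Fin n → A →ₗ[K] K) (hrec : ∀ a, a = ε a • (1 : A) + ∑ i, ξ i a • m i)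
    (u v : A ⊗[K] L) (h0 : reduceTensor ε.toLinearMap u = reduceTensor ε.toLinearMap v)
    (h : ∀ i, reduceTensor (ξ i) u = reduceTensor (ξ i) v) : u = v := by
  have key : ∀ t : A ⊗[K] L, t = (1 : A) ⊗ₜ[K] reduceTensor ε.toLinearMap t
      + ∑ i, m i ⊗ₜ[K] reduceTensor (ξ i) t := by
    intro t
    induction t with
    | zero => simp
    | add u v hu hv =>
      simp only [map_add, TensorProduct.tmul_add, Finset.sum_add_distrib]
      nth_rewrite 1 [hu, hv]
      abel
    | tmul a l =>
      simp only [rT_tmul, TensorProduct.tmul_smul, TensorProduct.smul_tmul']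
      rw [← TensorProduct.sum_tmul, ← TensorProduct.add_tmul]
      exact congrArg (· ⊗ₜ[K] l) (hrec a)
  rw [key u, key v, h0]
  simp only [h]

/-- Universality of the infinitesimal deformation `η₁` with base `C₁ = K ⊕ H′`:
for any infinitesimal deformation `λ` of `L` with finite dimensional base `A`
there is a unique augmentation-preserving algebra homomorphism `φ : C₁ → A`
such that the push-out `φ_*η₁` is equivalent to `λ`.

`H` plays the role of `HL²(L;L)` via the section `μ : H → CL²(L;L)`, which
sends classes to representing cocycles, is injective modulo coboundaries and
hits every cocycle modulo coboundaries.  The algebra `C₁` is presented as an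
augmented algebra with square-zero augmentation ideal identified with `H′`
via `j`, and `η₁` is the deformation with
`[1⊗l₁,1⊗l₂]_{η₁} = 1⊗[l₁,l₂] + Σᵢ gᵢ ⊗ μᵢ(l₁,l₂)`, written coordinate-freely
through `dualTensorHomEquiv`. -/
theorem universal_infinitesimal_deformation
    {K L H C₁ A : Type*} [Field K] [CharZero K]
    [AddCommGroup L] [Module K L]
    [AddCommGroup H] [Module K H] [FiniteDimensional K H]
    [CommRing C₁] [Algebra K C₁]
    [CommRing A] [Algebra K A] [FiniteDimensional K A] [IsLocalRing A]
    -- the Leibniz algebra L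
    (bll : L → L → L)
    (h_add_left : ∀ x y z : L, bll (x + y) z = bll x z + bll y z)
    (h_add_right : ∀ x y z : L, bll x (y + z) = bll x y + bll x z)
    (h_smul_left : ∀ (c : K) (x y : L), bll (c • x) y = c • bll x y)
    (h_smul_right : ∀ (c : K) (x y : L), bll x (c • y) = c • bll x y)
    (h_leibniz : ∀ x y z : L, bll x (bll y z) = bll (bll x y) z - bll (bll x z) y)
    -- μ : H → CL²(L;L), a linear section of the projection onto H = HL²(L;L)
    (μ : H → L → L → L)
    (hμ_addH : ∀ (α β : H) (x y : L), μ (α + β) x y = μ α x y + μ β x y)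
    (hμ_smulH : ∀ (c : K) (α : H) (x y : L), μ (c • α) x y = c • μ α x y)
    (hμ_add_left : ∀ (α : H) (x y z : L), μ α (x + y) z = μ α x z + μ α y z)
    (hμ_add_right : ∀ (α : H) (x y z : L), μ α x (y + z) = μ α x y + μ α x z)
    (hμ_smul_left : ∀ (α : H) (c : K) (x y : L), μ α (c • x) y = c • μ α x y)
    (hμ_smul_right : ∀ (α : H) (c : K) (x y : L), μ α x (c • y) = c • μ α x y)
    (hμ_cocycle : ∀ (α : H) (x y z : L),
      bll x (μ α y z) + bll (μ α x z) y - bll (μ α x y) z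
        - μ α (bll x y) z + μ α (bll x z) y + μ α x (bll y z) = 0)
    -- μ is injective into cohomology
    (hμ_inj : ∀ α : H,
      (∃ g : L →ₗ[K] L, ∀ x y : L,
        μ α x y = bll x (g y) + bll (g x) y - g (bll x y)) → α = 0)
    -- every 2-cocycle is cohomologous to some μ(α)
    (hμ_full : ∀ ψ : L → L → L,
      (∀ x y z : L, ψ (x + y) z = ψ x z + ψ y z) →
      (∀ x y z : L, ψ x (y + z) = ψ x y + ψ x z) →
      (∀ (c : K) (x y : L), ψ (c • x) y = c • ψ x y) →
      (∀ (c : K) (x y : L), ψ x (c • y) = c • ψ x y) →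
      (∀ x y z : L,
        bll x (ψ y z) + bll (ψ x z) y - bll (ψ x y) z
          - ψ (bll x y) z + ψ (bll x z) y + ψ x (bll y z) = 0) →
      ∃ (α : H) (g : L →ₗ[K] L), ∀ x y : L,
        ψ x y = μ α x y + (bll x (g y) + bll (g x) y - g (bll x y)))
    -- C₁ = K ⊕ H′ : augmented algebra with square-zero ideal H′
    (ε₁ : C₁ →ₐ[K] K)
    (j : Module.Dual K H →ₗ[K] C₁)
    (hj_inj : Function.Injective j)
    (hj_range : LinearMap.range j = LinearMap.ker ε₁.toLinearMap)
    (hj_sq : ∀ f g : Module.Dual K H, j f * j g = 0)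
    -- η₁ : the universal infinitesimal deformation with base C₁
    (br₁ : C₁ ⊗[K] L → C₁ ⊗[K] L → C₁ ⊗[K] L)
    (hbr₁_add_left : ∀ x y z, br₁ (x + y) z = br₁ x z + br₁ y z)
    (hbr₁_add_right : ∀ x y z, br₁ x (y + z) = br₁ x y + br₁ x z)
    (hbr₁_smul_left : ∀ (c : C₁) x y, br₁ (c • x) y = c • br₁ x y)
    (hbr₁_smul_right : ∀ (c : C₁) x y, br₁ x (c • y) = c • br₁ x y)
    (hbr₁_leibniz : ∀ x y z, br₁ x (br₁ y z) = br₁ (br₁ x y) z - br₁ (br₁ x z) y)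
    (hcompat₁ : ∀ x y,
      reduceTensor ε₁.toLinearMap (br₁ x y)
        = bll (reduceTensor ε₁.toLinearMap x) (reduceTensor ε₁.toLinearMap y))
    (hgen : ∀ l₁ l₂ : L,
      br₁ ((1 : C₁) ⊗ₜ[K] l₁) ((1 : C₁) ⊗ₜ[K] l₂)
        = (1 : C₁) ⊗ₜ[K] bll l₁ l₂
          + TensorProduct.map j LinearMap.id
              ((dualTensorHomEquiv K H L).symm
                ⟨⟨fun α => μ α l₁ l₂, fun α β => hμ_addH α β l₁ l₂⟩,
                  fun c α => hμ_smulH c α l₁ l₂⟩))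
    -- λ : an infinitesimal deformation of L with base A (𝔐² = 0)
    (ε : A →ₐ[K] K)
    (hM2 : ∀ a b : A, ε a = 0 → ε b = 0 → a * b = 0)
    (brA : A ⊗[K] L → A ⊗[K] L → A ⊗[K] L)
    (hbrA_add_left : ∀ x y z, brA (x + y) z = brA x z + brA y z)
    (hbrA_add_right : ∀ x y z, brA x (y + z) = brA x y + brA x z)
    (hbrA_smul_left : ∀ (a : A) x y, brA (a • x) y = a • brA x y)
    (hbrA_smul_right : ∀ (a : A) x y, brA x (a • y) = a • brA x y)
    (hbrA_leibniz : ∀ x y z, brA x (brA y z) = brA (brA x y) z - brA (brA x z) y)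
    (hcompatA : ∀ x y,
      reduceTensor ε.toLinearMap (brA x y)
        = bll (reduceTensor ε.toLinearMap x) (reduceTensor ε.toLinearMap y)) :
    ∃! φ : C₁ →ₐ[K] A,
      ε.comp φ = ε₁ ∧
      ∃ Φ : (A ⊗[K] L) ≃ₗ[A] (A ⊗[K] L),
        (∀ x, reduceTensor ε.toLinearMap (Φ x) = reduceTensor ε.toLinearMap x)
        ∧ ∀ l₁ l₂ : L,
            Φ (TensorProduct.map φ.toLinearMap LinearMap.id
                (br₁ ((1 : C₁) ⊗ₜ[K] l₁) ((1 : C₁) ⊗ₜ[K] l₂)))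
              = brA (Φ ((1 : A) ⊗ₜ[K] l₁)) (Φ ((1 : A) ⊗ₜ[K] l₂)) := by
  obtain ⟨n, m, ξ, hm, hξ1, hξm, hrec⟩ := exists_coords ε
  have hder : ∀ ζ : A →ₗ[K] K, ζ 1 = 0 → ∀ a b, ζ (a * b) = ε a * ζ b + ζ a * ε b := by
    intro ζ hζ a b
    have h := hM2 (a - algebraMap K A (ε a)) (b - algebraMap K A (ε b)) (by simp) (by simp)
    have h2 : a * b = ε a • b + ε b • a - (ε a * ε b) • (1 : A) := by
      simp only [Algebra.smul_def, map_mul]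
      linear_combination h
    rw [h2]
    simp [hζ]
    ring
  have hε1 : ∀ l : L, reduceTensor ε.toLinearMap ((1 : A) ⊗ₜ[K] l) = l := by
    intro l; rw [rT_tmul]; simp
  -- the cochain attached to a functional
  have P : ∀ ζ : A →ₗ[K] K, ζ 1 = 0 → ∀ s t, reduceTensor ζ (brA s t) =
      reduceTensor ζ (brA ((1 : A) ⊗ₜ[K] reduceTensor ε.toLinearMap s)
        ((1 : A) ⊗ₜ[K] reduceTensor ε.toLinearMap t))
      + bll (reduceTensor ζ s) (reduceTensor ε.toLinearMap t)
      + bll (reduceTensor ε.toLinearMap s) (reduceTensor ζ t) := by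
    intro ζ hζ s t
    have hz1 : ∀ y, brA 0 y = 0 := fun y => by simpa using hbrA_smul_left 0 0 y
    have hz2 : ∀ y, brA y 0 = 0 := fun y => by simpa using hbrA_smul_right 0 y 0
    have hz3 : ∀ y, bll 0 y = 0 := fun y => by simpa using h_smul_left 0 0 y
    have hz4 : ∀ y, bll y 0 = 0 := fun y => by simpa using h_smul_right 0 y 0
    induction s with
    | zero => simp [hz1, hz3]
    | add s s' hs hs' =>
      simp only [map_add, hbrA_add_left, hs, hs', TensorProduct.tmul_add, h_add_left]
      abel
    | tmul a x =>
      induction t with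
      | zero => simp [hz2, hz4]
      | add t t' ht ht' =>
        simp only [map_add, hbrA_add_right, ht, ht', TensorProduct.tmul_add, h_add_right]
        abel
      | tmul b y =>
        have e1 : ∀ (c : A) (l : L), c ⊗ₜ[K] l = c • ((1 : A) ⊗ₜ[K] l) := by
          intro c l; rw [TensorProduct.smul_tmul']; simp
        have e2 : ∀ (c : K) (l : L), (1 : A) ⊗ₜ[K] (c • l)
            = (algebraMap K A c) • ((1 : A) ⊗ₜ[K] l) := by
          intro c l; rw [TensorProduct.tmul_smul, algebraMap_smul]
        have hs : ∀ (c : A) u, reduceTensor ζ (c • u) = _ := rT_smul (L := L) ε ζ (hder ζ hζ)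
        have hc : ∀ c, ζ (algebraMap K A c) = 0 := by
          intro c; rw [Algebra.algebraMap_eq_smul_one]; simp [hζ]
        rw [e1 a x, e1 b y]
        simp only [hbrA_smul_left, hbrA_smul_right, hs, rT_smul_eps, hcompatA, hε1, e2, hc,
          h_smul_left, h_smul_right, rT_tmul, hζ, AlgHom.commutes, zero_smul, smul_zero, add_zero,
          zero_add, Algebra.algebraMap_self, RingHom.id_apply]
        module
  have Q : ∀ ζ : A →ₗ[K] K, ζ 1 = 0 → ∀ Φ : (A ⊗[K] L) ≃ₗ[A] (A ⊗[K] L),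
      (∀ x, reduceTensor ε.toLinearMap (Φ x) = reduceTensor ε.toLinearMap x) →
      ∀ t, reduceTensor ζ (Φ t) = reduceTensor ζ t
        + reduceTensor ζ (Φ ((1 : A) ⊗ₜ[K] reduceTensor ε.toLinearMap t)) := by
    intro ζ hζ Φ hΦ t
    induction t with
    | zero => simp
    | add s s' hs hs' =>
      simp only [map_add, hs, hs', TensorProduct.tmul_add]
      abel
    | tmul a x =>
      have e1 : a ⊗ₜ[K] x = a • ((1 : A) ⊗ₜ[K] x) := by
        rw [TensorProduct.smul_tmul']; simp
      have e2 : ∀ (c : K) (l : L), (1 : A) ⊗ₜ[K] (c • l)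
          = (algebraMap K A c) • ((1 : A) ⊗ₜ[K] l) := by
        intro c l; rw [TensorProduct.tmul_smul, algebraMap_smul]
      have hc : ∀ c, ζ (algebraMap K A c) = 0 := by
        intro c; rw [Algebra.algebraMap_eq_smul_one]; simp [hζ]
      have hs : ∀ (c : A) u, reduceTensor ζ (c • u) = _ := rT_smul (L := L) ε ζ (hder ζ hζ)
      rw [e1]
      simp only [map_smul, hs, rT_smul_eps, hΦ, hε1, e2, hc, rT_tmul, hζ, AlgHom.commutes,
        zero_smul, smul_zero, add_zero, zero_add, Algebra.algebraMap_self, RingHom.id_apply]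
      module
  have hεj : ∀ f, ε₁ (j f) = 0 := by
    intro f
    have : j f ∈ LinearMap.ker ε₁.toLinearMap := hj_range ▸ LinearMap.mem_range_self j f
    exact this
  -- the left side
  have R : ∀ ζ : A →ₗ[K] K, ζ 1 = 0 → ∀ φ : C₁ →ₐ[K] A, ε.comp φ = ε₁ →
      ∀ α : H, (∀ f, ζ (φ (j f)) = f α) → ∀ x y : L,
      reduceTensor ζ (TensorProduct.map φ.toLinearMap LinearMap.id
        (br₁ ((1 : C₁) ⊗ₜ[K] x) ((1 : C₁) ⊗ₜ[K] y))) = μ α x y := by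
    intro ζ hζ φ hφ α hα x y
    rw [rT_map, hgen, map_add, rT_dual _ j α (by intro f; simpa using hα f), rT_tmul]
    simp [hζ]
  have R0 : ∀ φ : C₁ →ₐ[K] A, ε.comp φ = ε₁ → ∀ x y : L,
      reduceTensor ε.toLinearMap (TensorProduct.map φ.toLinearMap LinearMap.id
        (br₁ ((1 : C₁) ⊗ₜ[K] x) ((1 : C₁) ⊗ₜ[K] y))) = bll x y := by
    intro φ hφ x y
    have : ε.toLinearMap.comp φ.toLinearMap = ε₁.toLinearMap := by rw [← hφ]; rfl
    rw [rT_map, this, hcompat₁]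
    simp [rT_tmul]
  -- p : C₁ → Dual
  obtain ⟨q, hq⟩ := LinearMap.exists_leftInverse_of_injective j (LinearMap.ker_eq_bot.2 hj_inj)
  let p : C₁ →ₗ[K] Module.Dual K H :=
    q.comp (LinearMap.id - (LinearMap.toSpanSingleton K C₁ 1).comp ε₁.toLinearMap)
  have hqj : ∀ f, q (j f) = f := fun f => LinearMap.congr_fun hq f
  have hjp : ∀ c, j (p c) = c - ε₁ c • (1 : C₁) := by
    intro c
    have h : c - ε₁ c • (1 : C₁) ∈ LinearMap.range j := by rw [hj_range]; simp
    obtain ⟨f, hf⟩ := h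
    have : p c = q (c - ε₁ c • (1 : C₁)) := by simp [p]
    rw [this, ← hf, hqj]
  have hpj : ∀ f, p (j f) = f := by
    intro f; apply hj_inj; rw [hjp, hεj]; simp
  have hp1 : p 1 = 0 := by
    apply hj_inj; rw [hjp]; simp
  have hpmul : ∀ a b, p (a * b) = ε₁ a • p b + ε₁ b • p a := by
    intro a b
    apply hj_inj
    have h := hj_sq (p a) (p b)
    rw [map_add, map_smul, map_smul]
    rw [hjp, hjp] at *
    rw [hjp]
    simp only [Algebra.smul_def, map_mul] at *
    linear_combination h
  apply existsUnique_of_exists_of_unique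
  · have hex : ∀ i, ∃ (α : H) (g : L →ₗ[K] L), ∀ x y : L,
        reduceTensor (ξ i) (brA ((1 : A) ⊗ₜ[K] x) ((1 : A) ⊗ₜ[K] y))
          = μ α x y + (bll x (g y) + bll (g x) y - g (bll x y)) := by
      intro i
      apply hμ_full (fun x y => reduceTensor (ξ i) (brA ((1 : A) ⊗ₜ[K] x) ((1 : A) ⊗ₜ[K] y)))
      · intro x y z; simp only [TensorProduct.tmul_add, hbrA_add_left, map_add]
      · intro x y z; simp only [TensorProduct.tmul_add, hbrA_add_right, map_add]
      · intro c x y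
        rw [TensorProduct.tmul_smul, ← algebraMap_smul A c, hbrA_smul_left, algebraMap_smul,
          map_smul]
      · intro c x y
        rw [TensorProduct.tmul_smul, ← algebraMap_smul A c, hbrA_smul_right, algebraMap_smul,
          map_smul]
      · intro x y z
        have hz3 : ∀ y, bll 0 y = 0 := fun y => by simpa using h_smul_left 0 0 y
        have hz4 : ∀ y, bll y 0 = 0 := fun y => by simpa using h_smul_right 0 y 0
        have h := congrArg (reduceTensor (ξ i))
          (hbrA_leibniz ((1 : A) ⊗ₜ[K] x) ((1 : A) ⊗ₜ[K] y) ((1 : A) ⊗ₜ[K] z))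
        rw [map_sub, P _ (hξ1 i) _ (brA _ _), P _ (hξ1 i) (brA _ _) _,
          P _ (hξ1 i) (brA _ _) _] at h
        simp only [hcompatA, hε1] at h
        have h0 : ∀ l : L, reduceTensor (ξ i) ((1 : A) ⊗ₜ[K] l) = 0 := by
          intro l; rw [rT_tmul, hξ1, zero_smul]
        simp only [h0, hz3, hz4, add_zero] at h
        rw [← sub_eq_zero] at h
        rw [← h]
        abel
    choose α g hg using hex
    let φl : C₁ →ₗ[K] A := (LinearMap.toSpanSingleton K A 1).comp ε₁.toLinearMap
      + ∑ i, (LinearMap.toSpanSingleton K A (m i)).comp ((Module.Dual.eval K H (α i)).comp p)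
    have hφl : ∀ c, φl c = ε₁ c • (1 : A) + ∑ i, p c (α i) • m i := by
      intro c; simp [φl]
    have hεs : ∀ w : Fin n → K, ε (∑ i, w i • m i) = 0 := by
      intro w; simp [hm]
    let φ : C₁ →ₐ[K] A := AlgHom.ofLinearMap φl (by rw [hφl]; simp [hp1]) (by
      intro a b
      have h := hM2 _ _ (hεs fun i => p a (α i)) (hεs fun i => p b (α i))
      have h2 : ∑ i, p (a * b) (α i) • m i
          = ε₁ a • ∑ i, p b (α i) • m i + ε₁ b • ∑ i, p a (α i) • m i := by
        rw [Finset.smul_sum, Finset.smul_sum, ← Finset.sum_add_distrib]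
        refine Finset.sum_congr rfl fun i _ => ?_
        rw [hpmul]
        simp only [LinearMap.add_apply, LinearMap.smul_apply, smul_eq_mul]
        module
      rw [hφl, hφl, hφl, h2]
      simp only [Algebra.smul_def (_ : K) (_ : A), map_mul] at *
      linear_combination -h)
    have hφ : ∀ c, φ c = ε₁ c • (1 : A) + ∑ i, p c (α i) • m i := hφl
    have hεφ : ε.comp φ = ε₁ := by
      ext c
      rw [AlgHom.comp_apply, hφ, map_add, hεs]
      simp
    let N : Module.End A (A ⊗[K] L) := ∑ i, m i • (-(g i)).baseChange A
    have hN : N * N = 0 := by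
      simp only [N]
      rw [Finset.sum_mul_sum]
      refine Finset.sum_eq_zero fun i _ => Finset.sum_eq_zero fun k _ => ?_
      rw [smul_mul_smul_comm, hM2 _ _ (hm i) (hm k), zero_smul]
    have hNN : N + (-1 : A) • N = 0 := by
      have h : (1 : A) • N + (-1 : A) • N = 0 := by rw [← add_smul, add_neg_cancel, zero_smul]
      rwa [one_smul] at h
    let Φ : (A ⊗[K] L) ≃ₗ[A] (A ⊗[K] L) := LinearEquiv.ofLinearMap (1 + N) (1 + (-1 : A) • N)
      (by
        change (1 + N) * (1 + (-1 : A) • N) = 1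
        rw [mul_add, mul_one, mul_smul_comm, add_mul, hN, one_mul, add_zero,
          add_assoc, hNN, add_zero])
      (by
        change (1 + (-1 : A) • N) * (1 + N) = 1
        rw [add_mul, mul_add, mul_one, one_mul, smul_mul_assoc, mul_add, hN, mul_one, add_zero,
          add_assoc, hNN, add_zero])
    have hΦN : ∀ t, Φ t = t + ∑ i, m i • (-(g i)).baseChange A t := by
      intro t
      change (1 + N) t = _
      simp [N, LinearMap.sum_apply]
    have hΦε : ∀ t, reduceTensor ε.toLinearMap (Φ t) = reduceTensor ε.toLinearMap t := by
      intro t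
      rw [hΦN, map_add, map_sum]
      simp only [rT_smul_eps, hm, zero_smul]
      simp
    have hΦξ : ∀ k l, reduceTensor (ξ k) (Φ ((1 : A) ⊗ₜ[K] l)) = - g k l := by
      intro k l
      rw [hΦN, map_add, map_sum]
      simp only [rT_smul ε (ξ k) (hder _ (hξ1 k)), hm, hξm, LinearMap.baseChange_tmul, rT_tmul, hξ1]
      simp
    refine ⟨φ, hεφ, Φ, hΦε, ?_⟩
    intro x y
    apply rT_ext ε m ξ hrec
    · rw [hΦε, R0 φ hεφ, hcompatA, hΦε, hΦε, hε1, hε1]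
    · intro k
      rw [Q _ (hξ1 k) Φ hΦε, R0 φ hεφ, hΦξ, R _ (hξ1 k) φ hεφ (α k), P _ (hξ1 k), hΦε, hΦε, hε1,
        hε1, hg, hΦξ, hΦξ, ← neg_one_smul K (g k x), ← neg_one_smul K (g k y), h_smul_left,
        h_smul_right]
      · module
      · intro f
        rw [hφ, hpj, hεj]
        simp [hξm]
  · rintro φ φ' ⟨hφ, Φ, hΦ, hE⟩ ⟨hφ', Φ', hΦ', hE'⟩
    have key : ∀ (ζ : A →ₗ[K] K), ζ 1 = 0 → ∀ f, ζ (φ (j f)) = ζ (φ' (j f)) := by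
      intro ζ hζ
      have hal : ∀ χ : C₁ →ₐ[K] A, ∃ α : H, ∀ f, ζ (χ (j f)) = f α := by
        intro χ
        refine ⟨(Module.evalEquiv K H).symm ((ζ.comp χ.toLinearMap).comp j), fun f => ?_⟩
        rw [Module.apply_evalEquiv_symm_apply]
        rfl
      obtain ⟨α, hα⟩ := hal φ
      obtain ⟨β, hβ⟩ := hal φ'
      let G : ((A ⊗[K] L) ≃ₗ[A] (A ⊗[K] L)) → L →ₗ[K] L := fun Ψ =>
        (reduceTensor ζ).comp ((Ψ.toLinearMap.restrictScalars K).comp (TensorProduct.mk K A L 1))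
      have hG : ∀ Ψ l, reduceTensor ζ (Ψ ((1 : A) ⊗ₜ[K] l)) = G Ψ l := fun Ψ l => rfl
      have main : ∀ χ : C₁ →ₐ[K] A, ε.comp χ = ε₁ → ∀ γ : H, (∀ f, ζ (χ (j f)) = f γ) →
          ∀ Ψ : (A ⊗[K] L) ≃ₗ[A] (A ⊗[K] L),
          (∀ x, reduceTensor ε.toLinearMap (Ψ x) = reduceTensor ε.toLinearMap x) →
          (∀ l₁ l₂ : L, Ψ (TensorProduct.map χ.toLinearMap LinearMap.id
                (br₁ ((1 : C₁) ⊗ₜ[K] l₁) ((1 : C₁) ⊗ₜ[K] l₂)))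
              = brA (Ψ ((1 : A) ⊗ₜ[K] l₁)) (Ψ ((1 : A) ⊗ₜ[K] l₂))) →
          ∀ x y, μ γ x y = reduceTensor ζ (brA ((1 : A) ⊗ₜ[K] x) ((1 : A) ⊗ₜ[K] y))
            + bll (G Ψ x) y + bll x (G Ψ y) - G Ψ (bll x y) := by
        intro χ hχ γ hγ Ψ hΨ hEq x y
        have h := congrArg (reduceTensor ζ) (hEq x y)
        rw [Q ζ hζ Ψ hΨ, R0 χ hχ, R ζ hζ χ hχ γ hγ, P ζ hζ, hΨ, hΨ, hε1, hε1, hG, hG, hG] at h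
        exact eq_sub_of_add_eq h
      have h1 := main φ hφ α hα Φ hΦ hE
      have h2 := main φ' hφ' β hβ Φ' hΦ' hE'
      have h3 : α + (-1 : K) • β = 0 := by
        apply hμ_inj
        refine ⟨G Φ + (-1 : K) • G Φ', fun x y => ?_⟩
        rw [hμ_addH, hμ_smulH, h1, h2]
        simp only [LinearMap.add_apply, LinearMap.smul_apply, h_add_left, h_add_right, h_smul_left,
          h_smul_right]
        module
      have h4 : α = β := by
        rw [neg_one_smul, ← sub_eq_add_neg, sub_eq_zero] at h3
        exact h3
      intro f
      rw [hα, hβ, h4]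
    have keyj : ∀ f, φ (j f) = φ' (j f) := by
      intro f
      have e : ∀ χ : C₁ →ₐ[K] A, ε.comp χ = ε₁ → ε (χ (j f)) = 0 := by
        intro χ hχ
        rw [← AlgHom.comp_apply, hχ, hεj]
      rw [hrec (φ (j f)), hrec (φ' (j f)), e φ hφ, e φ' hφ']
      simp only [key _ (hξ1 _)]
    apply AlgHom.ext
    intro c
    have hc : c = ε₁ c • (1 : C₁) + j (p c) := by rw [hjp]; abel
    rw [hc, map_add, map_add, keyj, map_smul, map_smul, map_one, map_one]
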